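/- arXiv:2212.09279 — 4 statements merged into one kernel-verified Lean document; each statement's English description precedes it below -/
import Mathlib

section
/- Let 𝓕 be a finite nonempty union-closed family of finite sets with ∅ ∉ 𝓕, let k be the size of a smallest set of 𝓕 and n the size of the largest set of 𝓕, and let f be the number of abundant elements for 𝓕. If k ≥ n − 3, then f ≥ k. -/
/-- A family of finite sets (of naturals) is union-closed. -/
def UnionClosed (F : Finset (Finset ℕ)) : Prop :=
  ∀ A ∈ F, ∀ B ∈ F, A ∪ B ∈ F

/-- An element `x` is abundant for `F` if it belongs to more than half of the sets of `F`. -/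
def Abundant (F : Finset (Finset ℕ)) (x : ℕ) : Prop :=
  2 * (F.filter (fun A => x ∈ A)).card > F.card

instance (F : Finset (Finset ℕ)) : DecidablePred (Abundant F) := fun x =>
  inferInstanceAs (Decidable (2 * (F.filter (fun A => x ∈ A)).card > F.card))

/-- `F` is twin-free: for every two distinct elements of the union of all its sets,
some set of `F` contains exactly one of them. -/
def TwinFree (F : Finset (Finset ℕ)) : Prop :=
  ∀ a ∈ F.sup id, ∀ b ∈ F.sup id, a ≠ b → ∃ A ∈ F, (A ∩ {a, b}).card = 1

/-- `F` is an `(f,k,n)`-construction: it is a nonempty union-closed family with exactly `f`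
abundant elements, a smallest set of size `k`, and the largest set (the union) of size `n`. -/
def IsConstruction (F : Finset (Finset ℕ)) (f k n : ℕ) : Prop :=
  F.Nonempty ∧ UnionClosed F ∧
  ((F.sup id).filter (Abundant F)).card = f ∧
  (∃ S ∈ F, S.card = k) ∧ (∀ A ∈ F, k ≤ A.card) ∧
  (F.sup id).card = n

/-- The numbers `c S` of members of a union-closed family whose complement has trace `S` on `m + 1`
points cannot make every point lie in at least half of the complements, for `m ≤ 3`. -/
theorem trace_count_false (m : ℕ) (hm : m ≤ 3) (c : Finset (Fin (m + 1)) → ℕ)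
    (h0 : 0 < c ∅) (hu : ∀ S, m < S.card → c S = 0) (h1 : ∀ S, S.card = m → c S ≤ 1)
    (hi : ∀ S T, 0 < c S → 0 < c T → 0 < c (S ∩ T))
    (hx : ∀ i, ∑ S, c S ≤ 2 * ∑ S with i ∈ S, c S) : False := by
  simp only [Finset.sum_filter] at hx
  interval_cases m
  · have hU : (Finset.univ : Finset (Finset (Fin 1))) =
        {∅, {0}} := by decide
    have hs (g : Finset (Fin 1) → ℕ) : ∑ S, g S =
        g ∅ + g {0} := by
      rw [hU]
      repeat rw [Finset.sum_insert (by decide)]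
      rw [Finset.sum_singleton]
    simp only [hs] at hx
    have x0 := hx 0
    simp +decide only [if_true, if_false] at x0
    have u := hu {0} (by decide)
    omega
  · have hU : (Finset.univ : Finset (Finset (Fin 2))) =
        {∅, {0}, {1}, {0, 1}} := by decide
    have hs (g : Finset (Fin 2) → ℕ) : ∑ S, g S =
        g ∅ + g {0} + g {1} + g {0, 1} := by
      rw [hU]
      repeat rw [Finset.sum_insert (by decide)]
      rw [Finset.sum_singleton]
      ring
    simp only [hs] at hx
    have x0 := hx 0
    have x1 := hx 1
    simp +decide only [if_true, if_false] at x0 x1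
    have u := hu {0, 1} (by decide)
    have t0 := h1 {0} (by decide)
    have t1 := h1 {1} (by decide)
    omega
  · have hU : (Finset.univ : Finset (Finset (Fin 3))) =
        {∅, {0}, {1}, {2}, {0, 1}, {0, 2}, {1, 2}, {0, 1, 2}} := by decide
    have hs (g : Finset (Fin 3) → ℕ) : ∑ S, g S =
        g ∅ + g {0} + g {1} + g {2} + g {0, 1} + g {0, 2} + g {1, 2} + g {0, 1, 2} := by
      rw [hU]
      repeat rw [Finset.sum_insert (by decide)]
      rw [Finset.sum_singleton]
      ring
    simp only [hs] at hx
    have x0 := hx 0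
    have x1 := hx 1
    have x2 := hx 2
    simp +decide only [if_true, if_false] at x0 x1 x2
    have u := hu {0, 1, 2} (by decide)
    have t0 := h1 {0, 1} (by decide)
    have t1 := h1 {0, 2} (by decide)
    have t2 := h1 {1, 2} (by decide)
    have i02_01 : 0 < c {0, 2} → 0 < c {0, 1} → 0 < c {0} :=
      hi {0, 2} {0, 1}
    have i12_01 : 0 < c {1, 2} → 0 < c {0, 1} → 0 < c {1} :=
      hi {1, 2} {0, 1}
    have i12_02 : 0 < c {1, 2} → 0 < c {0, 2} → 0 < c {2} :=
      hi {1, 2} {0, 2}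
    omega
  · have hU : (Finset.univ : Finset (Finset (Fin 4))) =
        {∅, {0}, {1}, {2}, {3}, {0, 1}, {0, 2}, {0, 3}, {1, 2}, {1, 3}, {2, 3}, {0, 1, 2},
          {0, 1, 3}, {0, 2, 3}, {1, 2, 3}, {0, 1, 2, 3}} := by decide
    have hs (g : Finset (Fin 4) → ℕ) : ∑ S, g S =
        g ∅ + g {0} + g {1} + g {2} + g {3} + g {0, 1} + g {0, 2} + g {0, 3} + g {1, 2} +
          g {1, 3} + g {2, 3} + g {0, 1, 2} + g {0, 1, 3} + g {0, 2, 3} + g {1, 2, 3} +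
          g {0, 1, 2, 3} := by
      rw [hU]
      repeat rw [Finset.sum_insert (by decide)]
      rw [Finset.sum_singleton]
      ring
    simp only [hs] at hx
    have x0 := hx 0
    have x1 := hx 1
    have x2 := hx 2
    have x3 := hx 3
    simp +decide only [if_true, if_false] at x0 x1 x2 x3
    have u := hu {0, 1, 2, 3} (by decide)
    have t0 := h1 {0, 1, 2} (by decide)
    have t1 := h1 {0, 1, 3} (by decide)
    have t2 := h1 {0, 2, 3} (by decide)
    have t3 := h1 {1, 2, 3} (by decide)
    have i012_03 : 0 < c {0, 1, 2} → 0 < c {0, 3} → 0 < c {0} :=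
      hi {0, 1, 2} {0, 3}
    have i012_13 : 0 < c {0, 1, 2} → 0 < c {1, 3} → 0 < c {1} :=
      hi {0, 1, 2} {1, 3}
    have i012_23 : 0 < c {0, 1, 2} → 0 < c {2, 3} → 0 < c {2} :=
      hi {0, 1, 2} {2, 3}
    have i013_02 : 0 < c {0, 1, 3} → 0 < c {0, 2} → 0 < c {0} :=
      hi {0, 1, 3} {0, 2}
    have i013_12 : 0 < c {0, 1, 3} → 0 < c {1, 2} → 0 < c {1} :=
      hi {0, 1, 3} {1, 2}
    have i013_23 : 0 < c {0, 1, 3} → 0 < c {2, 3} → 0 < c {3} :=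
      hi {0, 1, 3} {2, 3}
    have i013_012 : 0 < c {0, 1, 3} → 0 < c {0, 1, 2} → 0 < c {0, 1} :=
      hi {0, 1, 3} {0, 1, 2}
    have i023_01 : 0 < c {0, 2, 3} → 0 < c {0, 1} → 0 < c {0} :=
      hi {0, 2, 3} {0, 1}
    have i023_12 : 0 < c {0, 2, 3} → 0 < c {1, 2} → 0 < c {2} :=
      hi {0, 2, 3} {1, 2}
    have i023_13 : 0 < c {0, 2, 3} → 0 < c {1, 3} → 0 < c {3} :=
      hi {0, 2, 3} {1, 3}
    have i023_012 : 0 < c {0, 2, 3} → 0 < c {0, 1, 2} → 0 < c {0, 2} :=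
      hi {0, 2, 3} {0, 1, 2}
    have i023_013 : 0 < c {0, 2, 3} → 0 < c {0, 1, 3} → 0 < c {0, 3} :=
      hi {0, 2, 3} {0, 1, 3}
    have i123_01 : 0 < c {1, 2, 3} → 0 < c {0, 1} → 0 < c {1} :=
      hi {1, 2, 3} {0, 1}
    have i123_02 : 0 < c {1, 2, 3} → 0 < c {0, 2} → 0 < c {2} :=
      hi {1, 2, 3} {0, 2}
    have i123_03 : 0 < c {1, 2, 3} → 0 < c {0, 3} → 0 < c {3} :=
      hi {1, 2, 3} {0, 3}
    have i123_012 : 0 < c {1, 2, 3} → 0 < c {0, 1, 2} → 0 < c {1, 2} :=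
      hi {1, 2, 3} {0, 1, 2}
    have i123_013 : 0 < c {1, 2, 3} → 0 < c {0, 1, 3} → 0 < c {1, 3} :=
      hi {1, 2, 3} {0, 1, 3}
    have i123_023 : 0 < c {1, 2, 3} → 0 < c {0, 2, 3} → 0 < c {2, 3} :=
      hi {1, 2, 3} {0, 2, 3}
    rcases Nat.eq_zero_or_pos (c {0, 1, 2}) with h012 | h012 <;>
    rcases Nat.eq_zero_or_pos (c {0, 1, 3}) with h013 | h013 <;>
    rcases Nat.eq_zero_or_pos (c {0, 2, 3}) with h023 | h023 <;>
    rcases Nat.eq_zero_or_pos (c {1, 2, 3}) with h123 | h123 <;>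
    simp only [h012, h013, h023, h123, lt_self_iff_false, false_imp_iff, true_imp_iff,
      imp_true_iff]
      at i012_03 i012_13 i012_23 i013_02 i013_12 i013_23 i013_012 i023_01 i023_12 i023_13
        i023_012 i023_013 i123_01 i123_02 i123_03 i123_012 i123_013 i123_023 <;>
    omega

/-- A nonempty union-closed family contains the union of its members. -/
theorem UnionClosed.sup_mem {F : Finset (Finset ℕ)} (hUC : UnionClosed F) (hF : F.Nonempty) :
    F.sup id ∈ F := by
  rw [← Finset.sup'_eq_sup hF]
  exact Finset.sup'_mem (F : Set (Finset ℕ)) hUC F hF id fun _ h => h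

theorem abundance_k_ge_n_sub_3 (F : Finset (Finset ℕ)) (hF : F.Nonempty)
    (hUC : UnionClosed F) (hE : (∅ : Finset ℕ) ∉ F) (k n f : ℕ)
    (hk₁ : ∃ S ∈ F, S.card = k) (hk₂ : ∀ A ∈ F, k ≤ A.card)
    (hn : (F.sup id).card = n)
    (hf : ((F.sup id).filter (Abundant F)).card = f)
    (hkn : k ≥ n - 3) :
    f ≥ k := by
  subst hn hf
  by_contra! hlt
  set U := F.sup id with hU
  have hsub : ∀ A ∈ F, A ⊆ U := fun A hA => Finset.le_sup (f := id) hA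
  have hUF : U ∈ F := hUC.sup_mem hF
  have hkU : k ≤ U.card := hk₂ U hUF
  have hcard := Finset.card_filter_add_card_filter_not (s := U) (Abundant F)
  obtain ⟨R, hRsub, hR⟩ := Finset.exists_subset_card_eq
    (show U.card - k + 1 ≤ (U.filter fun x => ¬ Abundant F x).card by omega)
  obtain ⟨m, hm⟩ : ∃ m, m = U.card - k := ⟨_, rfl⟩
  rw [← hm] at hR
  let e : Fin (m + 1) ↪ ℕ := (R.orderEmbOfFin hR).toEmbedding
  have he (i) : e i ∈ U ∧ ¬ Abundant F (e i) :=
    Finset.mem_filter.1 (hRsub (R.orderEmbOfFin_mem hR i))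
  let tr (A : Finset ℕ) : Finset (Fin (m + 1)) := Finset.univ.filter fun i => e i ∉ A
  have htr (A : Finset ℕ) (i) : i ∈ tr A ↔ e i ∉ A := by simp [tr]
  have hmap (A : Finset ℕ) : (tr A).map e ⊆ U \ A := by
    intro x hx
    obtain ⟨i, hi, rfl⟩ := Finset.mem_map.1 hx
    exact Finset.mem_sdiff.2 ⟨(he i).1, (htr A i).1 hi⟩
  have hdiff (A) (hA : A ∈ F) : (U \ A).card ≤ m := by
    rw [Finset.card_sdiff_of_subset (hsub A hA), hm]
    exact Nat.sub_le_sub_left (hk₂ A hA) _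
  refine trace_count_false m (by omega) (fun S => (F.filter fun A => tr A = S).card)
    ?_ ?_ ?_ ?_ ?_
  · refine Finset.card_pos.2 ⟨U, Finset.mem_filter.2 ⟨hUF, ?_⟩⟩
    ext i
    simp [htr, (he i).1]
  · intro S hS
    simp only [Finset.card_eq_zero, Finset.filter_eq_empty_iff]
    rintro A hA rfl
    have := Finset.card_le_card (hmap A)
    rw [Finset.card_map] at this
    exact absurd (this.trans (hdiff A hA)) (by omega)
  · intro S hS
    have hcompl (A) (hA : A ∈ F) (hAS : tr A = S) : U \ S.map e = A := by
      subst hAS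
      have hle : (U \ A).card ≤ ((tr A).map e).card := by
        rw [Finset.card_map, hS]
        exact hdiff A hA
      rw [Finset.eq_of_subset_of_card_le (hmap A) hle, Finset.sdiff_sdiff_eq_self (hsub A hA)]
    refine Finset.card_le_one.2 fun A hA B hB => ?_
    rw [Finset.mem_filter] at hA hB
    rw [← hcompl A hA.1 hA.2, hcompl B hB.1 hB.2]
  · simp only [Finset.card_pos]
    rintro S T ⟨A, hA⟩ ⟨B, hB⟩
    rw [Finset.mem_filter] at hA hB
    refine ⟨A ∪ B, Finset.mem_filter.2 ⟨hUC A hA.1 B hB.1, ?_⟩⟩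
    rw [← hA.2, ← hB.2]
    ext i
    simp [htr]
  · intro i
    have hall : F.card = ∑ S, (F.filter fun A => tr A = S).card :=
      Finset.card_eq_sum_card_fiberwise fun _ _ => Finset.mem_coe.2 (Finset.mem_univ _)
    have hmiss : (F.filter fun A => e i ∉ A).card =
        ∑ S with i ∈ S, (F.filter fun A => tr A = S).card := by
      rw [Finset.card_eq_sum_card_fiberwise (f := tr) (t := Finset.univ.filter (i ∈ ·))]
      · refine Finset.sum_congr rfl fun S hS => ?_
        rw [Finset.filter_filter]
        congr 1
        refine Finset.filter_congr fun A _ => ?_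
        rw [← htr]
        exact ⟨fun h => h.2, fun h => ⟨h ▸ (Finset.mem_filter.1 hS).2, h⟩⟩
      · intro A hA
        simpa [htr] using (Finset.mem_filter.1 (Finset.mem_coe.1 hA)).2
    have hnot := (he i).2
    unfold Abundant at hnot
    have hsplit := Finset.card_filter_add_card_filter_not (s := F) (e i ∈ ·)
    rw [← hall, ← hmiss]
    omega
end

section
/- Let 𝓕 be a finite nonempty union-closed family of finite sets with ∅ ∉ 𝓕, let k be the size of a smallest set of 𝓕 and n the size of the largest set of 𝓕, and let f be the number of abundant elements for 𝓕. If k = n − 4, then f ≥ k − 1. -/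
/-- The `4`-element subsets of `Fin 6`, in lexicographic order. -/
def fourSets : Fin 15 → Finset (Fin 6) :=
  ![{0, 1, 2, 3}, {0, 1, 2, 4}, {0, 1, 2, 5}, {0, 1, 3, 4}, {0, 1, 3, 5},
    {0, 1, 4, 5}, {0, 2, 3, 4}, {0, 2, 3, 5}, {0, 2, 4, 5}, {0, 3, 4, 5},
    {1, 2, 3, 4}, {1, 2, 3, 5}, {1, 2, 4, 5}, {1, 3, 4, 5}, {2, 3, 4, 5}]

/-- For each `P` of size `2`, the bit masks (indexed as `fourSets`) of the `4`-sets
that contain `P` and avoid `v`, for each `v ∉ P`. -/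
def pairMasks : List (Finset (Fin 6) × List ℕ) :=
  [({0, 1}, [56, 38, 21, 11]),
   ({0, 2}, [448, 262, 133, 67]),
   ({0, 3}, [704, 536, 145, 73]),
   ({0, 4}, [832, 552, 290, 74]),
   ({0, 5}, [896, 560, 292, 148]),
   ({1, 2}, [7168, 4102, 2053, 1027]),
   ({1, 3}, [11264, 8216, 2065, 1033]),
   ({1, 4}, [13312, 8232, 4130, 1034]),
   ({1, 5}, [14336, 8240, 4132, 2068]),
   ({2, 3}, [19456, 16576, 2177, 1089]),
   ({2, 4}, [21504, 16704, 4354, 1090]),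
   ({2, 5}, [22528, 16768, 4356, 2180]),
   ({3, 4}, [25600, 16960, 8712, 1096]),
   ({3, 5}, [26624, 17024, 8720, 2192]),
   ({4, 5}, [28672, 17152, 8736, 4384])]

/-- For each `P` of size `1`, the bit masks (indexed as `fourSets`) of the `4`-sets
that contain `P` and avoid `v`, for each `v ∉ P`. -/
def singleMasks : List (Finset (Fin 6) × List ℕ) :=
  [({0}, [960, 568, 294, 149, 75]),
   ({1}, [15360, 8248, 4134, 2069, 1035]),
   ({2}, [23552, 16832, 4358, 2181, 1091]),
   ({3}, [27648, 17088, 8728, 2193, 1097]),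
   ({4}, [29696, 17216, 8744, 4386, 1098]),
   ({5}, [30720, 17280, 8752, 4388, 2196])]

/-- For each `v`, the bit mask of the `4`-sets that avoid `v`. -/
def avoidMasks : List (Fin 6 × List ℕ) :=
  [(0, [31744]), (1, [17344]), (2, [8760]), (3, [4390]), (4, [2197]), (5, [1099])]

/-- Does `h` share a bit with every mask in `l`? (This function and the two below are written with
recursors, which the kernel evaluates much faster than compiled pattern matching.) -/
def meetsAll (h : ℕ) (l : List ℕ) : Bool :=
  l.rec true fun m _ ih => (Nat.beq (Nat.land h m) 0).rec ih false

/-- The number of rows of the table `t` all of whose masks meet `h`. -/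
def countMeeting {α : Type} (h : ℕ) (t : List (α × List ℕ)) : ℕ :=
  t.rec 0 fun r _ ih => (meetsAll h r.2).rec ih (Nat.succ ih)

/-- A lower bound for the weight of the proper intersections of the `4`-sets coded by `h`. -/
def meetWeight (h : ℕ) : ℕ :=
  countMeeting h pairMasks + 2 * countMeeting h singleMasks + 3

/-- Branch and bound over all families of `4`-sets whose code agrees with `h` from bit `j` on,
where `c` is the number of these bits that are set. -/
def search (j : ℕ) : ℕ → ℕ → Bool :=
  j.rec
    (fun h c => (Nat.blt c (meetWeight h)).rec
      ((Nat.ble (countMeeting h avoidMasks) 4).rec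
        ((Nat.ble (countMeeting h avoidMasks) 5).rec false (Nat.ble 10 c)) true) true)
    fun j ih h c => (Nat.blt (c + (j + 1)) (meetWeight h)).rec
      ((ih (Nat.lor h (2 ^ j)) (c + 1)).rec false (ih h c)) true

theorem search_eq_true : search 15 0 0 = true := by decide +kernel

theorem meetsAll_eq_true {h : ℕ} {l : List ℕ} :
    meetsAll h l = true ↔ ∀ m ∈ l, ∃ i, h.testBit i = true ∧ m.testBit i = true := by
  induction l with
  | nil => simp [meetsAll]
  | cons m l ih =>
    have hcons : meetsAll h (m :: l) = (Nat.beq (Nat.land h m) 0).rec (meetsAll h l) false := rfl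
    have hm : Nat.beq (Nat.land h m) 0 = false ↔
        ∃ i, h.testBit i = true ∧ m.testBit i = true := by
      rw [← Bool.not_eq_true, Nat.beq_eq, ← Ne]
      constructor
      · intro hne
        obtain ⟨i, hi⟩ := Nat.exists_testBit_of_ne_zero hne
        exact ⟨i, by simpa [HAnd.hAnd, AndOp.and] using (Nat.testBit_and h m i).symm.trans hi⟩
      · rintro ⟨i, hi⟩ h0
        have := Nat.testBit_and h m i
        rw [show h &&& m = 0 from h0] at this
        simp [hi] at this
    rw [hcons, List.forall_mem_cons, ← hm, ← ih]
    cases Nat.beq (Nat.land h m) 0 <;> simp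

theorem countMeeting_eq {α : Type} (h : ℕ) (t : List (α × List ℕ)) :
    countMeeting h t = ((t.filter fun r => meetsAll h r.2).map Prod.fst).length := by
  induction t with
  | nil => rfl
  | cons r t ih =>
    have hcons : countMeeting h (r :: t) =
        (meetsAll h r.2).rec (countMeeting h t) (Nat.succ (countMeeting h t)) := rfl
    rw [hcons, ih, List.filter_cons]
    cases meetsAll h r.2 <;> simp

theorem countMeeting_le_card {α : Type} [DecidableEq α] {h : ℕ} {t : List (α × List ℕ)}
    (ht : (t.map Prod.fst).Nodup) {Z : Finset α}
    (hZ : ∀ r ∈ t, meetsAll h r.2 = true → r.1 ∈ Z) : countMeeting h t ≤ Z.card := by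
  rw [countMeeting_eq, ← List.toFinset_card_of_nodup (ht.sublist (List.filter_sublist.map _))]
  refine Finset.card_le_card fun z hz => ?_
  obtain ⟨r, hr, rfl⟩ := List.mem_map.1 (List.mem_toFinset.1 hz)
  exact hZ r (List.mem_filter.1 hr).1 (List.mem_filter.1 hr).2

theorem card_le_countMeeting {α : Type} [DecidableEq α] {h : ℕ} {t : List (α × List ℕ)}
    {Z : Finset α} (hZ : ∀ z ∈ Z, ∃ r ∈ t, r.1 = z ∧ meetsAll h r.2 = true) :
    Z.card ≤ countMeeting h t := by
  rw [countMeeting_eq]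
  refine (Finset.card_le_card fun z hz => ?_).trans (List.toFinset_card_le _)
  obtain ⟨r, hr, rfl, hm⟩ := hZ z hz
  exact List.mem_toFinset.2 (List.mem_map_of_mem (List.mem_filter.2 ⟨hr, hm⟩))

theorem search_sound (q : ℕ → Prop) [DecidablePred q] {j h c : ℕ} (hs : search j h c = true)
    (hj : j ≤ 15) (hq : ∀ i, h.testBit i = true → q i)
    (hh : ∀ i, j ≤ i → i < 15 → q i → h.testBit i = true)
    (hc : c = ((Finset.Ico j 15).filter q).card) :
    ∃ h' : ℕ, (∀ i, h'.testBit i = true → q i) ∧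
      (((Finset.Ico 0 15).filter q).card < meetWeight h' ∨
        (∀ i < 15, q i → h'.testBit i = true) ∧
          (countMeeting h' avoidMasks ≤ 4 ∨
            countMeeting h' avoidMasks ≤ 5 ∧ 10 ≤ ((Finset.Ico 0 15).filter q).card)) := by
  induction j generalizing h c with
  | zero =>
    refine ⟨h, hq, ?_⟩
    rw [← hc]
    have hs' : ((Nat.blt c (meetWeight h)).rec
      ((Nat.ble (countMeeting h avoidMasks) 4).rec
        ((Nat.ble (countMeeting h avoidMasks) 5).rec false (Nat.ble 10 c)) true) true : Bool)
        = true := hs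
    rcases hb : Nat.blt c (meetWeight h) with _ | _
    · refine Or.inr ⟨fun i => hh i i.zero_le, ?_⟩
      rw [hb] at hs'
      rcases hb4 : Nat.ble (countMeeting h avoidMasks) 4 with _ | _
      · rw [hb4] at hs'
        rcases hb5 : Nat.ble (countMeeting h avoidMasks) 5 with _ | _
        · rw [hb5] at hs'
          simp at hs'
        · rw [hb5] at hs'
          exact Or.inr ⟨Nat.le_of_ble_eq_true hb5, Nat.le_of_ble_eq_true hs'⟩
      · exact Or.inl (Nat.le_of_ble_eq_true hb4)
    · exact Or.inl (Nat.le_of_ble_eq_true hb)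
  | succ j ih =>
    have hs' : ((Nat.blt (c + (j + 1)) (meetWeight h)).rec
      ((search j (Nat.lor h (2 ^ j)) (c + 1)).rec false (search j h c)) true : Bool) = true := hs
    have hIco : Finset.Ico j 15 = insert j (Finset.Ico (j + 1) 15) :=
      (Finset.insert_Ico_add_one_left_eq_Ico (by omega)).symm
    rcases hb : Nat.blt (c + (j + 1)) (meetWeight h) with _ | _
    · rw [hb] at hs'
      have h1 : search j (Nat.lor h (2 ^ j)) (c + 1) = true := by
        by_contra hn
        rw [Bool.not_eq_true] at hn
        rw [hn] at hs'
        exact Bool.false_ne_true hs'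
      have h2 : search j h c = true := by rwa [h1] at hs'
      by_cases hqj : q j
      · have hbit (i : ℕ) : (Nat.lor h (2 ^ j)).testBit i = (h.testBit i || decide (j = i)) := by
          rw [← Nat.testBit_two_pow]
          exact Nat.testBit_or h (2 ^ j) i
        refine ih h1 (by omega) (fun i hi => ?_) (fun i hi hi' hqi => ?_) ?_
        · rw [hbit] at hi
          rcases Bool.or_eq_true_iff.1 hi with hi | hi
          · exact hq i hi
          · exact of_decide_eq_true hi ▸ hqj
        · rw [hbit]
          rcases hi.eq_or_lt with rfl | hlt
          · simp
          · simp [hh i hlt hi' hqi]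
        · rw [hIco, Finset.filter_insert, if_pos hqj, Finset.card_insert_of_notMem (by simp), hc]
      · refine ih h2 (by omega) hq (fun i hi hi' hqi => ?_) ?_
        · rcases hi.eq_or_lt with rfl | hlt
          · exact absurd hqi hqj
          · exact hh i hlt hi' hqi
        · rw [hIco, Finset.filter_insert, if_neg hqj, hc]
    · refine ⟨h, hq, Or.inl (lt_of_le_of_lt ?_ (Nat.le_of_ble_eq_true hb))⟩
      rw [← Finset.Ico_union_Ico_eq_Ico (Nat.zero_le (j + 1)) hj, Finset.filter_union, hc]
      refine (Finset.card_union_le _ _).trans ?_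
      rw [add_comm]
      exact Nat.add_le_add_left ((Finset.card_filter_le _ _).trans (by simp)) _

theorem mem_of_separated {α : Type} [DecidableEq α] [Fintype α] {K : Finset (Finset α)}
    (hK : ∀ S ∈ K, ∀ T ∈ K, S ∩ T ∈ K) {P : Finset α} (hP : P ≠ Finset.univ)
    (hsep : ∀ v ∉ P, ∃ W ∈ K, P ⊆ W ∧ v ∉ W) : P ∈ K := by
  have key (s : Finset α) (hs : Disjoint s P) : s.Nonempty →
      ∃ U ∈ K, P ⊆ U ∧ Disjoint s U := by
    intro hne
    induction hne using Finset.Nonempty.cons_induction with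
    | singleton v =>
      obtain ⟨W, hW, hPW, hv⟩ := hsep v (by simpa using hs)
      exact ⟨W, hW, hPW, by simpa using hv⟩
    | cons v s hv hne ih =>
      rw [Finset.cons_eq_insert, Finset.disjoint_insert_left] at hs
      obtain ⟨W, hW, hPW, hvW⟩ := hsep v hs.1
      obtain ⟨U, hU, hPU, hsU⟩ := ih hs.2
      refine ⟨W ∩ U, hK W hW U hU, Finset.subset_inter hPW hPU, ?_⟩
      rw [Finset.cons_eq_insert, Finset.disjoint_insert_left]
      exact ⟨fun hvm => hvW (Finset.mem_inter.1 hvm).1,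
        hsU.mono_right Finset.inter_subset_right⟩
  have hne : Pᶜ.Nonempty := by
    rwa [Finset.nonempty_iff_ne_empty, Ne, Finset.compl_eq_empty_iff]
  obtain ⟨U, hU, hPU, hd⟩ := key Pᶜ disjoint_compl_left hne
  have : U ⊆ P := by
    rw [← Finset.compl_subset_compl]
    exact fun x hx => Finset.mem_compl.2 fun hxU => Finset.disjoint_left.1 hd hx hxU
  rwa [hPU.antisymm this]

theorem pairMasks_spec : ∀ r ∈ pairMasks, r.1.card = 2 ∧ ∀ v ∉ r.1, ∃ m ∈ r.2,
    ∀ i : Fin 15, m.testBit i = true → r.1 ⊆ fourSets i ∧ v ∉ fourSets i := by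
  decide +kernel

theorem singleMasks_spec : ∀ r ∈ singleMasks, r.1.card = 1 ∧ ∀ v ∉ r.1, ∃ m ∈ r.2,
    ∀ i : Fin 15, m.testBit i = true → r.1 ⊆ fourSets i ∧ v ∉ fourSets i := by
  decide +kernel

theorem avoidMasks_spec : ∀ v, ∃ r ∈ avoidMasks, r.1 = v ∧ ∀ m ∈ r.2,
    ∀ i : Fin 15, v ∉ fourSets i → m.testBit i = true := by
  decide +kernel

theorem fourSets_injective : Function.Injective fourSets := by
  decide +kernel

theorem exists_fourSets_eq : ∀ S : Finset (Fin 6), S.card = 4 → ∃ i, fourSets i = S := by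
  decide +kernel

theorem card_fourSets : ∀ i, (fourSets i).card = 4 := by
  decide +kernel

/-- In an intersection-closed family of subsets of `Fin 6`, the `4`-sets are outweighed by the
smaller sets, or they have two common elements, or they are all the `4`-sets through a point. -/
theorem four_sets_trichotomy {K : Finset (Finset (Fin 6))} (hK : ∀ S ∈ K, ∀ T ∈ K, S ∩ T ∈ K) :
    (K.filter (·.card = 4)).card <
        (K.filter (·.card = 2)).card + 2 * (K.filter (·.card = 1)).card + 3 ∨
      (∃ a b, a ≠ b ∧ ∀ S ∈ K, S.card = 4 → a ∈ S ∧ b ∈ S) ∨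
      (∃ a, (∀ S ∈ K, S.card = 4 → a ∈ S) ∧ 10 ≤ (K.filter (·.card = 4)).card) := by
  let q : ℕ → Prop := fun i => ∃ hi : i < 15, fourSets ⟨i, hi⟩ ∈ K
  have hcard : ((Finset.Ico 0 15).filter q).card = (K.filter (·.card = 4)).card := by
    refine Finset.card_bij (fun i hi => fourSets ⟨i, (Finset.mem_filter.1 hi).2.1⟩) ?_ ?_ ?_
    · intro i hi
      exact Finset.mem_filter.2 ⟨(Finset.mem_filter.1 hi).2.2, card_fourSets _⟩
    · intro i hi i' hi' h
      simpa using fourSets_injective h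
    · intro S hS
      obtain ⟨i, rfl⟩ := exists_fourSets_eq S (Finset.mem_filter.1 hS).2
      exact ⟨i, Finset.mem_filter.2 ⟨by simp, i.2, (Finset.mem_filter.1 hS).1⟩, rfl⟩
  have hempty : Finset.Ico 15 15 = (∅ : Finset ℕ) := by simp
  obtain ⟨h, hq, hcase⟩ := search_sound q search_eq_true le_rfl (by simp)
    (by intros; omega) (by rw [hempty]; simp)
  rw [hcard] at hcase
  have hmem {P : Finset (Fin 6)} {l : List ℕ} (hP : P.card < 6) (hl : meetsAll h l = true)
      (hsp : ∀ v ∉ P, ∃ m ∈ l, ∀ i : Fin 15, m.testBit i = true →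
        P ⊆ fourSets i ∧ v ∉ fourSets i) : P ∈ K := by
    refine mem_of_separated hK (by rintro rfl; simp at hP) fun v hv => ?_
    obtain ⟨m, hm, hmi⟩ := hsp v hv
    obtain ⟨i, hi, hi'⟩ := meetsAll_eq_true.1 hl m hm
    obtain ⟨hlt, hiK⟩ := hq i hi
    exact ⟨_, hiK, hmi ⟨i, hlt⟩ hi'⟩
  rcases hcase with hlt | ⟨hall, hcase⟩
  · left
    have h2 : countMeeting h pairMasks ≤ (K.filter (·.card = 2)).card := by
      refine countMeeting_le_card (by decide +kernel) fun r hr hm => ?_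
      obtain ⟨hc, hsp⟩ := pairMasks_spec r hr
      exact Finset.mem_filter.2 ⟨hmem (by omega) hm hsp, hc⟩
    have h1 : countMeeting h singleMasks ≤ (K.filter (·.card = 1)).card := by
      refine countMeeting_le_card (by decide +kernel) fun r hr hm => ?_
      obtain ⟨hc, hsp⟩ := singleMasks_spec r hr
      exact Finset.mem_filter.2 ⟨hmem (by omega) hm hsp, hc⟩
    simp only [meetWeight] at hlt
    omega
  · right
    let C : Finset (Fin 6) := Finset.univ.filter fun v => ∀ S ∈ K, S.card = 4 → v ∈ S
    have hC : Cᶜ.card ≤ countMeeting h avoidMasks := by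
      refine card_le_countMeeting fun v hv => ?_
      obtain ⟨r, hr, hrv, hm⟩ := avoidMasks_spec v
      refine ⟨r, hr, hrv, meetsAll_eq_true.2 fun m hm' => ?_⟩
      simp only [C, Finset.mem_compl, Finset.mem_filter, Finset.mem_univ, true_and] at hv
      push Not at hv
      obtain ⟨S, hS, hS4, hvS⟩ := hv
      obtain ⟨i, rfl⟩ := exists_fourSets_eq S hS4
      exact ⟨i, hall i i.2 ⟨i.2, hS⟩, hm m hm' i hvS⟩
    rw [Finset.card_compl, Fintype.card_fin] at hC
    rcases hcase with h4 | ⟨h5, h10⟩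
    · left
      obtain ⟨a, ha, b, hb, hab⟩ := Finset.one_lt_card.1 (show 1 < C.card by omega)
      simp only [C, Finset.mem_filter, Finset.mem_univ, true_and] at ha hb
      exact ⟨a, b, hab, fun S hS hS4 => ⟨ha S hS hS4, hb S hS hS4⟩⟩
    · right
      obtain ⟨a, ha⟩ := Finset.card_pos.1 (show 0 < C.card by omega)
      simp only [C, Finset.mem_filter, Finset.mem_univ, true_and] at ha
      exact ⟨a, ha, h10⟩

/-- Summing the degree condition over the elements of `N`. -/
theorem sum_mul_inter_nonneg {w : Finset (Fin 6) → ℕ}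
    (hdeg : ∀ i, 0 ≤ ∑ S, (w S : ℤ) * (if i ∈ S then 1 else -1)) (N : Finset (Fin 6)) :
    0 ≤ ∑ S, (w S : ℤ) * (2 * (S ∩ N).card - N.card) := by
  have h := Finset.sum_nonneg fun i (_ : i ∈ N) => hdeg i
  rw [Finset.sum_comm] at h
  refine h.trans_eq (Finset.sum_congr rfl fun S _ => ?_)
  rw [← Finset.mul_sum]
  congr 1
  have h1 : (N.filter (· ∈ S)).card + (N.filter (· ∉ S)).card = N.card :=
    Finset.card_filter_add_card_filter_not _
  rw [Finset.filter_mem_eq_inter, Finset.inter_comm] at h1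
  rw [Finset.sum_ite, Finset.sum_const, Finset.sum_const, Finset.filter_mem_eq_inter,
    Finset.inter_comm]
  simp only [nsmul_eq_mul]
  push_cast [← h1]
  ring

theorem card_sets_through_point : ∀ a : Fin 6,
    (Finset.univ.filter fun S : Finset (Fin 6) => a ∈ S ∧ S.card = 4).card = 10 ∧
    (Finset.univ.filter fun S : Finset (Fin 6) => a ∈ S ∧ S.card = 3).card = 10 ∧
    (Finset.univ.filter fun S : Finset (Fin 6) => a ∈ S ∧ S.card = 2).card = 5 := by
  decide +kernel

theorem card_inter_of_pair_mem : ∀ a b : Fin 6, a ≠ b →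
    ∀ S : Finset (Fin 6), S.card = 3 → a ∉ S → b ∉ S →
    ∀ W : Finset (Fin 6), W.card = 4 → a ∈ W → b ∈ W →
      ((W ∩ S).card = 1 ∨ (W ∩ S).card = 2) ∧
        W = (W ∩ S) ∪ (if (W ∩ S).card = 1 then Sᶜ else {a, b}) := by
  decide +kernel

theorem exists_four_separating : ∀ a : Fin 6, ∀ P : Finset (Fin 6), a ∈ P → P.card ≤ 3 →
    ∀ v ∉ P, ∃ W : Finset (Fin 6), a ∈ W ∧ W.card = 4 ∧ P ⊆ W ∧ v ∉ W := by
  decide +kernel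

theorem exists_four_inter_eq_one : ∀ a : Fin 6, ∀ S : Finset (Fin 6), S.card = 3 → a ∉ S →
    ∃ W : Finset (Fin 6), a ∈ W ∧ W.card = 4 ∧ (W ∩ S).card = 1 := by
  decide +kernel

/-- The multiplicities `w` of the traces on six elements of an intersection-closed family of sets
of size at most `4`, where `K` consists of the members inside the six elements, cannot have every
element in at least half of the sets. -/
theorem false_of_weights {w : Finset (Fin 6) → ℕ} {K : Finset (Finset (Fin 6))}
    (hw : ∀ S ∈ K, 1 ≤ w S) (h0 : ∅ ∈ K) (hcard : ∀ S, w S ≠ 0 → S.card ≤ 4)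
    (h4 : ∀ S, S.card = 4 → w S ≠ 0 → S ∈ K ∧ w S = 1)
    (hint : ∀ S ∈ K, ∀ T, w T ≠ 0 → S ∩ T ∈ K)
    (hdeg : ∀ i, 0 ≤ ∑ S, (w S : ℤ) * (if i ∈ S then 1 else -1)) : False := by
  have hw0 {S} (hS : S ∈ K) : w S ≠ 0 := Nat.one_le_iff_ne_zero.1 (hw S hS)
  have hK : ∀ S ∈ K, ∀ T ∈ K, S ∩ T ∈ K := fun S hS T hT => hint S hS T (hw0 hT)
  have hU : (K.filter (·.card = 2)).card + 2 * (K.filter (·.card = 1)).card + 3 ≤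
      (K.filter (·.card = 4)).card := by
    have h := sum_mul_inter_nonneg hdeg Finset.univ
    have hle : ∑ S, (w S : ℤ) * (2 * (S ∩ Finset.univ).card - (Finset.univ : Finset (Fin 6)).card)
        ≤ ∑ S : Finset (Fin 6), ((if S ∈ K.filter (·.card = 4) then 2 else 0) -
          (if S ∈ K.filter (·.card = 2) then 2 else 0) -
          (if S ∈ K.filter (·.card = 1) then 4 else 0) - (if S = ∅ then 6 else 0) : ℤ) := by
      refine Finset.sum_le_sum fun S _ => ?_
      simp only [Finset.inter_univ, Finset.card_univ, Fintype.card_fin, Finset.mem_filter,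
        ← Finset.card_eq_zero (s := S)]
      have hS0 : S.card = 0 → S ∈ K := fun h => Finset.card_eq_zero.1 h ▸ h0
      have h4' := h4 S
      have hcard' := hcard S
      have hw' := hw S
      rcases Nat.eq_zero_or_pos (w S) with hz | hpos
      · have hSK : S ∉ K := fun h => by have := hw' h; omega
        have : S.card ≠ 0 := fun h => hSK (hS0 h)
        simp [hz, hSK, this]
      · have hle := hcard' hpos.ne'
        interval_cases hc : S.card
        · simp
          omega
        · by_cases hSK : S ∈ K <;> simp [hSK]
          omega
        · by_cases hSK : S ∈ K <;> simp [hSK]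
          omega
        · simp
        · obtain ⟨hSK, h1⟩ := h4' rfl hpos.ne'
          simp [hSK, h1]
    have h' := h.trans hle
    simp only [Finset.sum_sub_distrib, Finset.sum_ite_mem, Finset.univ_inter, Finset.sum_const,
      Finset.sum_ite_eq', Finset.mem_univ, if_true, nsmul_eq_mul] at h'
    omega
  rcases four_sets_trichotomy hK with hlt | ⟨a, b, hab, hcom⟩ | ⟨a, hcom, h10⟩
  · omega
  · have hab2 : ({a, b} : Finset (Fin 6)).card = 2 := Finset.card_pair hab
    have hN : ({a, b}ᶜ : Finset (Fin 6)).card = 4 := by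
      rw [Finset.card_compl, hab2, Fintype.card_fin]
    have hsplit (S : Finset (Fin 6)) : (S ∩ {a, b}).card + (S ∩ {a, b}ᶜ).card = S.card := by
      rw [← Finset.sdiff_eq_inter_compl, Finset.card_inter_add_card_sdiff]
    obtain ⟨S, hwS, hS3⟩ : ∃ S, w S ≠ 0 ∧ 3 ≤ (S ∩ {a, b}ᶜ).card := by
      by_contra! hno
      have hneg : ∑ S, (w S : ℤ) *
          (2 * (S ∩ {a, b}ᶜ).card - ({a, b}ᶜ : Finset (Fin 6)).card) < 0 := by
        refine Finset.sum_neg' (fun S _ => ?_) ⟨∅, Finset.mem_univ _, ?_⟩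
        · rcases eq_or_ne (w S) 0 with hz | hz
          · simp [hz]
          · have := hno S hz
            refine mul_nonpos_of_nonneg_of_nonpos (by positivity) ?_
            rw [hN]
            push_cast
            omega
        · have := hw ∅ h0
          rw [hN]
          simp
          omega
      exact hneg.not_ge (sum_mul_inter_nonneg hdeg _)
    have hSle := hcard S hwS
    have hS4 : S.card ≠ 4 := fun h => by
      obtain ⟨ha, hb⟩ := hcom S (h4 S h hwS).1 h
      have : S ∩ {a, b} = {a, b} :=
        Finset.inter_eq_right.2 (by simp [Finset.insert_subset_iff, ha, hb])
      have h2 := hsplit S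
      rw [this, hab2] at h2
      omega
    have hSsplit := hsplit S
    have hSc : S.card = 3 := by omega
    have hdisj : S ∩ {a, b} = ∅ := Finset.card_eq_zero.1 (by omega)
    have haS : a ∉ S := fun h => by
      have : a ∈ S ∩ {a, b} := by simp [h]
      simp [hdisj] at this
    have hbS : b ∉ S := fun h => by
      have : b ∈ S ∩ {a, b} := by simp [h]
      simp [hdisj] at this
    have hinj : (K.filter (·.card = 4)).card ≤
        (K.filter (·.card = 2) ∪ K.filter (·.card = 1)).card := by
      refine Finset.card_le_card_of_injOn (· ∩ S) (fun W hW => ?_) (fun W hW V hV hWV => ?_)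
      · obtain ⟨hWK, hW4⟩ := Finset.mem_filter.1 hW
        obtain ⟨ha, hb⟩ := hcom W hWK hW4
        have hWS := hint W hWK S hwS
        rw [Finset.mem_coe, Finset.mem_union, Finset.mem_filter, Finset.mem_filter]
        exact (card_inter_of_pair_mem a b hab S hSc haS hbS W hW4 ha hb).1.symm.imp
          (⟨hWS, ·⟩) (⟨hWS, ·⟩)
      · obtain ⟨hWK, hW4⟩ := Finset.mem_filter.1 hW
        obtain ⟨hVK, hV4⟩ := Finset.mem_filter.1 hV
        obtain ⟨ha, hb⟩ := hcom W hWK hW4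
        obtain ⟨ha', hb'⟩ := hcom V hVK hV4
        have e1 := (card_inter_of_pair_mem a b hab S hSc haS hbS W hW4 ha hb).2
        have e2 := (card_inter_of_pair_mem a b hab S hSc haS hbS V hV4 ha' hb').2
        simp only at hWV
        rw [e1, e2, hWV]
    have := Finset.card_union_le (K.filter (·.card = 2)) (K.filter (·.card = 1))
    omega
  · obtain ⟨hc4, hc3, hc2⟩ := card_sets_through_point a
    have hmem4 (W : Finset (Fin 6)) (ha : a ∈ W) (hW : W.card = 4) : W ∈ K := by
      have hsub : K.filter (·.card = 4) ⊆
          Finset.univ.filter fun S : Finset (Fin 6) => a ∈ S ∧ S.card = 4 := fun S hS => by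
        obtain ⟨hSK, hS4⟩ := Finset.mem_filter.1 hS
        simpa [hS4] using hcom S hSK hS4
      have heq := Finset.eq_of_subset_of_card_le hsub (by omega)
      have hWm : W ∈ Finset.univ.filter fun S : Finset (Fin 6) => a ∈ S ∧ S.card = 4 := by
        simp [ha, hW]
      rw [← heq] at hWm
      exact (Finset.mem_filter.1 hWm).1
    have hmem (P : Finset (Fin 6)) (ha : a ∈ P) (hP : P.card ≤ 3) : P ∈ K := by
      refine mem_of_separated hK (by rintro rfl; simp at hP) fun v hv => ?_
      obtain ⟨W, haW, hW4, hPW, hvW⟩ := exists_four_separating a P ha hP v hv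
      exact ⟨W, hmem4 W haW hW4, hPW, hvW⟩
    have hK4 : (K.filter (·.card = 4)).card ≤ 10 := by
      rw [← hc4]
      refine Finset.card_le_card fun S hS => ?_
      obtain ⟨hSK, hS4⟩ := Finset.mem_filter.1 hS
      simpa [hS4] using hcom S hSK hS4
    have hK2 : 5 ≤ (K.filter (·.card = 2)).card := by
      rw [← hc2]
      refine Finset.card_le_card fun S hS => ?_
      obtain ⟨-, haS, hS2⟩ := Finset.mem_filter.1 hS
      exact Finset.mem_filter.2 ⟨hmem S haS (by omega), hS2⟩
    have hK1 : (K.filter (·.card = 1)).card ≤ 1 := by omega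
    have hthree (S : Finset (Fin 6)) (hwS : w S ≠ 0) (haS : a ∉ S) : S.card ≤ 2 := by
      by_contra! hS
      have hS4 : S.card ≠ 4 := fun h => haS (hcom S (h4 S h hwS).1 h)
      have hS3 : S.card = 3 := by have := hcard S hwS; omega
      obtain ⟨W, haW, hW4, hWS⟩ := exists_four_inter_eq_one a S hS3 haS
      have h1 : W ∩ S ∈ K.filter (·.card = 1) :=
        Finset.mem_filter.2 ⟨hint W (hmem4 W haW hW4) S hwS, hWS⟩
      have h2 : {a} ∈ K.filter (·.card = 1) :=
        Finset.mem_filter.2 ⟨hmem {a} (by simp) (by simp), by simp⟩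
      have := Finset.card_le_one.1 hK1 _ h1 _ h2
      have : a ∈ W ∩ S := by simp [this]
      exact haS (Finset.mem_inter.1 this).2
    have h := sum_mul_inter_nonneg hdeg {a}ᶜ
    have hle : ∑ S, (w S : ℤ) * (2 * (S ∩ {a}ᶜ).card - ({a}ᶜ : Finset (Fin 6)).card) ≤
        ∑ S : Finset (Fin 6), ((if a ∈ S ∧ S.card = 4 then 1 else 0) -
          (if a ∈ S ∧ S.card = 3 then 1 else 0) - (if S = ∅ then 1 else 0) : ℤ) := by
      refine Finset.sum_le_sum fun S _ => ?_
      have hN : ({a}ᶜ : Finset (Fin 6)).card = 5 := by simp [Finset.card_compl]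
      rw [hN, ← Finset.sdiff_eq_inter_compl, Finset.sdiff_singleton_eq_erase]
      by_cases haS : a ∈ S
      · have hS0 : S ≠ ∅ := Finset.ne_empty_of_mem haS
        have hpos : 0 < S.card := Finset.card_pos.2 ⟨a, haS⟩
        rw [Finset.card_erase_of_mem haS]
        simp only [haS, true_and, hS0, if_false]
        rcases Nat.eq_zero_or_pos (w S) with hz | hw1
        · have : S.card ≠ 3 := fun h => hw0 (hmem S haS h.le) hz
          simp only [hz, this, if_false]
          split_ifs <;> simp
        · have := hcard S hw1.ne'
          have h4S := h4 S
          interval_cases hc : S.card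
          · simp
          · simp
          · simp
            omega
          · simp [(h4S rfl hw1.ne').2]
      · rw [Finset.erase_eq_of_notMem haS]
        simp only [haS, false_and, if_false]
        rcases Nat.eq_zero_or_pos (w S) with hz | hw1
        · have hS0 : S ≠ ∅ := fun h => hw0 (h ▸ h0) hz
          simp [hz, hS0]
        · have := hthree S hw1.ne' haS
          have h1 : (w S : ℤ) * (2 * S.card - ((5 : ℕ) : ℤ)) ≤ 1 * (-1) := by
            push_cast
            nlinarith [show (1 : ℤ) ≤ w S by exact_mod_cast hw1,
              show (S.card : ℤ) ≤ 2 by exact_mod_cast this]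
          split_ifs <;> simp at h1 ⊢ <;> omega
    have h' := h.trans hle
    simp only [Finset.sum_sub_distrib, Finset.sum_boole, hc4, hc3] at h'
    simp at h'

theorem sup_id_mem {F : Finset (Finset ℕ)} (hF : F.Nonempty) (hUC : UnionClosed F) :
    F.sup id ∈ F := by
  rw [← Finset.sup'_eq_sup hF]
  exact Finset.sup'_induction hF id (p := (· ∈ F)) (fun A hA B hB => hUC A hA B hB)
    fun A hA => hA

/-- If all sets of a union-closed family miss at most four elements of its union, then at most five
elements are not abundant. -/
theorem card_not_abundant_le {F : Finset (Finset ℕ)} (hF : F.Nonempty) (hUC : UnionClosed F)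
    (hF4 : ∀ A ∈ F, (F.sup id \ A).card ≤ 4) :
    ((F.sup id).filter (¬ Abundant F ·)).card ≤ 5 := by
  by_contra! hsix
  set X := F.sup id with hX
  obtain ⟨M, hM, hM6⟩ := Finset.exists_subset_card_eq (show 6 ≤ _ from hsix)
  let φ : Fin 6 ↪ ℕ := (M.orderEmbOfFin hM6).toEmbedding
  have hφM (i) : φ i ∈ M := M.orderEmbOfFin_mem hM6 i
  have hφX (i) : φ i ∈ X := (Finset.mem_filter.1 (hM (hφM i))).1
  have hφa (i) : ¬ Abundant F (φ i) := (Finset.mem_filter.1 (hM (hφM i))).2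
  have hAX {A} (hA : A ∈ F) : A ⊆ X := Finset.le_sup (f := id) hA
  let tr : Finset ℕ → Finset (Fin 6) := fun A => Finset.univ.filter (φ · ∉ A)
  let K : Finset (Finset (Fin 6)) := Finset.univ.filter fun S => X \ S.map φ ∈ F
  let w : Finset (Fin 6) → ℕ := fun S => (F.filter (tr · = S)).card
  have hmapX (S : Finset (Fin 6)) : S.map φ ⊆ X := fun x hx => by
    obtain ⟨i, -, rfl⟩ := Finset.mem_map.1 hx
    exact hφX i
  have htr_sdiff (S) : tr (X \ S.map φ) = S := by
    ext i
    simp [tr, hφX]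
  have htr_sub (A) : (tr A).map φ ⊆ X \ A := fun x hx => by
    obtain ⟨i, hi, rfl⟩ := Finset.mem_map.1 hx
    exact Finset.mem_sdiff.2 ⟨hφX i, by simpa [tr] using hi⟩
  have hw {S} (hS : w S ≠ 0) : ∃ A ∈ F, tr A = S := by
    obtain ⟨A, hA⟩ := Finset.card_pos.1 (Nat.pos_of_ne_zero hS)
    exact ⟨A, Finset.mem_filter.1 hA⟩
  have htr_four {A} (hA : A ∈ F) (h : (tr A).card = 4) : A = X \ (tr A).map φ := by
    have : (tr A).map φ = X \ A := Finset.eq_of_subset_of_card_le (htr_sub A) (by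
      rw [Finset.card_map, h]
      exact hF4 A hA)
    rw [this, Finset.sdiff_sdiff_eq_self (hAX hA)]
  refine false_of_weights (w := w) (K := K) (fun S hS => ?_) ?_ (fun S hS => ?_)
    (fun S hS4 hS => ?_) (fun S hS T hT => ?_) (fun i => ?_)
  · exact Finset.card_pos.2 ⟨_, Finset.mem_filter.2 ⟨(Finset.mem_filter.1 hS).2, htr_sdiff S⟩⟩
  · simpa [K] using sup_id_mem hF hUC
  · obtain ⟨A, hA, rfl⟩ := hw hS
    rw [← Finset.card_map φ]
    exact (Finset.card_le_card (htr_sub A)).trans (hF4 A hA)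
  · obtain ⟨A, hA, rfl⟩ := hw hS
    refine ⟨Finset.mem_filter.2 ⟨Finset.mem_univ _, htr_four hA hS4 ▸ hA⟩, ?_⟩
    refine Finset.card_eq_one.2 ⟨A, Finset.eq_singleton_iff_unique_mem.2
      ⟨Finset.mem_filter.2 ⟨hA, rfl⟩, fun B hB => ?_⟩⟩
    obtain ⟨hB, hBA⟩ := Finset.mem_filter.1 hB
    rw [htr_four hB (hBA ▸ hS4), hBA, ← htr_four hA hS4]
  · obtain ⟨A, hA, rfl⟩ := hw hT
    refine Finset.mem_filter.2 ⟨Finset.mem_univ _, ?_⟩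
    convert hUC _ (Finset.mem_filter.1 hS).2 A hA using 1
    ext x
    have hxA : x ∈ A → x ∈ X := fun h => hAX hA h
    by_cases hx : ∃ i, φ i = x
    · obtain ⟨i, rfl⟩ := hx
      simp [tr, hφX]
      tauto
    · have (S : Finset (Fin 6)) : x ∉ S.map φ := fun h => by
        obtain ⟨i, -, hi⟩ := Finset.mem_map.1 h
        exact hx ⟨i, hi⟩
      simp only [Finset.mem_sdiff, Finset.mem_union, this]
      tauto
  · have hsum : ∑ S, (w S : ℤ) * (if i ∈ S then 1 else -1) =
        ∑ A ∈ F, (if φ i ∈ A then -1 else 1 : ℤ) := by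
      rw [← Finset.sum_fiberwise F tr]
      refine Finset.sum_congr rfl fun S _ => ?_
      rw [Finset.sum_congr rfl (g := fun _ => (if i ∈ S then 1 else -1 : ℤ)), Finset.sum_const,
        nsmul_eq_mul]
      intro A hA
      rw [← (Finset.mem_filter.1 hA).2]
      by_cases h : φ i ∈ A <;> simp [tr, h]
    have hcount : (F.filter (φ i ∈ ·)).card + (F.filter (φ i ∉ ·)).card = F.card :=
      Finset.card_filter_add_card_filter_not _
    have := hφa i
    simp only [Abundant] at this
    rw [hsum, Finset.sum_ite, Finset.sum_const, Finset.sum_const]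
    simp only [nsmul_eq_mul]
    omega

theorem abundance_k_eq_n_sub_4 (F : Finset (Finset ℕ)) (hF : F.Nonempty)
    (hUC : UnionClosed F) (hE : (∅ : Finset ℕ) ∉ F) (k n f : ℕ)
    (hk₁ : ∃ S ∈ F, S.card = k) (hk₂ : ∀ A ∈ F, k ≤ A.card)
    (hn : (F.sup id).card = n)
    (hf : ((F.sup id).filter (Abundant F)).card = f)
    (hkn : k = n - 4) :
    f ≥ k - 1 := by
  have h5 : ((F.sup id).filter (¬ Abundant F ·)).card ≤ 5 := by
    refine card_not_abundant_le hF hUC fun A hA => ?_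
    have := hk₂ A hA
    have hAX : A ⊆ F.sup id := Finset.le_sup (f := id) hA
    rw [Finset.card_sdiff_of_subset hAX]
    omega
  have := Finset.card_filter_add_card_filter_not (s := F.sup id) (Abundant F)
  omega
end

section
/- For all integers k ≥ 0 and n such that k is even and n ≥ max { 3, 5k − 8 }, there exists a (2,k,n)-construction, i.e. a finite union-closed family of finite sets with exactly 2 abundant elements, whose smallest set has size k and whose largest set has size n. -/
open Finset

/-- A union-closed family on `{0, …, 11}` whose abundant elements are exactly `0` and `1`: the sets
containing both of them and at least two of the other ten points, together with the sets that
contain `0` (resp. `1`) and at least three other points, all of them from `{2, …, 6}`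
(resp. `{7, …, 11}`). -/
def baseFamily : Finset (Finset ℕ) :=
  (range 12).powerset.filter fun A =>
    (0 ∈ A ∧ 1 ∈ A ∧ 2 ≤ (A ∩ Ico 2 12).card) ∨
      (3 ≤ (A ∩ Ico 2 12).card ∧
        ((0 ∈ A ∧ A ∩ Ico 2 12 ⊆ Ico 2 7) ∨ (1 ∈ A ∧ A ∩ Ico 2 12 ⊆ Ico 7 12)))

theorem mem_baseFamily {A : Finset ℕ} : A ∈ baseFamily ↔ A ⊆ range 12 ∧
    ((0 ∈ A ∧ 1 ∈ A ∧ 2 ≤ (A ∩ Ico 2 12).card) ∨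
      (3 ≤ (A ∩ Ico 2 12).card ∧
        ((0 ∈ A ∧ A ∩ Ico 2 12 ⊆ Ico 2 7) ∨ (1 ∈ A ∧ A ∩ Ico 2 12 ⊆ Ico 7 12)))) := by
  simp only [baseFamily, mem_filter, mem_powerset]

theorem unionClosed_baseFamily : UnionClosed baseFamily := by
  intro A hA B hB
  rw [mem_baseFamily] at *
  have hAc : (A ∩ Ico 2 12).card ≤ ((A ∪ B) ∩ Ico 2 12).card :=
    card_le_card (inter_subset_inter_right subset_union_left)
  have hBc : (B ∩ Ico 2 12).card ≤ ((A ∪ B) ∩ Ico 2 12).card :=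
    card_le_card (inter_subset_inter_right subset_union_right)
  refine ⟨union_subset hA.1 hB.1, ?_⟩
  simp only [mem_union, union_inter_distrib_right, union_subset_iff] at *
  grind

set_option maxRecDepth 100000 in
theorem abundant_baseFamily_iff :
    ∀ i ∈ range 12, Abundant baseFamily i ↔ i < 2 := by
  decide +kernel

/-- The preimage of `A` under `f` inside `range n`: each point of `A` is replaced by its fibre. -/
def blowUp (f : ℕ → ℕ) (n : ℕ) (A : Finset ℕ) : Finset ℕ :=
  (range n).filter fun x => f x ∈ A

theorem mem_blowUp {f : ℕ → ℕ} {n x : ℕ} {A : Finset ℕ} :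
    x ∈ blowUp f n A ↔ x < n ∧ f x ∈ A := by
  simp [blowUp]

theorem blowUp_union (f : ℕ → ℕ) (n : ℕ) (A B : Finset ℕ) :
    blowUp f n (A ∪ B) = blowUp f n A ∪ blowUp f n B := by
  ext x
  simp only [mem_blowUp, mem_union]
  tauto

theorem UnionClosed.image_blowUp {G : Finset (Finset ℕ)} (hG : UnionClosed G) (f : ℕ → ℕ) (n : ℕ) :
    UnionClosed (G.image (blowUp f n)) := by
  intro _ hA' _ hB'
  obtain ⟨A, hA, rfl⟩ := mem_image.1 hA'
  obtain ⟨B, hB, rfl⟩ := mem_image.1 hB'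
  exact mem_image.2 ⟨A ∪ B, hG A hA B hB, blowUp_union f n A B⟩

theorem blowUp_injOn {G : Finset (Finset ℕ)} {f : ℕ → ℕ} {n : ℕ}
    (hf : ∀ A ∈ G, ∀ i ∈ A, ∃ x < n, f x = i) : Set.InjOn (blowUp f n) G := by
  intro A hA B hB h
  ext i
  constructor
  · intro hi
    obtain ⟨x, hx, rfl⟩ := hf A hA i hi
    exact (mem_blowUp.1 (h ▸ mem_blowUp.2 ⟨hx, hi⟩)).2
  · intro hi
    obtain ⟨x, hx, rfl⟩ := hf B hB i hi
    exact (mem_blowUp.1 (h ▸ mem_blowUp.2 ⟨hx, hi⟩)).2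

theorem abundant_image_blowUp_iff {G : Finset (Finset ℕ)} {f : ℕ → ℕ} {n x : ℕ}
    (hf : ∀ A ∈ G, ∀ i ∈ A, ∃ x < n, f x = i) (hx : x < n) :
    Abundant (G.image (blowUp f n)) x ↔ Abundant G (f x) := by
  have hinj := blowUp_injOn hf
  have hfilter : (G.image (blowUp f n)).filter (x ∈ ·) =
      (G.filter (f x ∈ ·)).image (blowUp f n) := by
    rw [filter_image]
    simp only [mem_blowUp, hx, true_and]
  rw [Abundant, Abundant, hfilter, card_image_of_injOn hinj,
    card_image_of_injOn (hinj.mono (coe_subset.2 (filter_subset _ _)))]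

theorem card_blowUp (f : ℕ → ℕ) (n : ℕ) (A : Finset ℕ) :
    (blowUp f n A).card = ∑ i ∈ A, ((range n).filter fun x => f x = i).card := by
  rw [card_eq_sum_card_fiberwise (f := f) (t := A) fun x hx => (mem_blowUp.1 hx).2]
  refine sum_congr rfl fun i hi => congrArg card ?_
  ext x
  simp only [mem_filter, mem_blowUp, mem_range]
  grind

/-- The map from `ℕ` to `{0, …, 11}` fixing `0` and `1` whose fibres over `3, …, 11` have `m`
elements and whose fibre over `2` contains all the remaining numbers. -/
def collapse (m x : ℕ) : ℕ :=
  if x < 2 then x else if x < 2 + 10 * m then 2 + (x - 2) % 10 else 2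

theorem collapse_lt_two {m x : ℕ} : collapse m x < 2 ↔ x < 2 := by
  unfold collapse
  split_ifs <;> omega

theorem collapse_mem_range (m x : ℕ) : collapse m x ∈ range 12 := by
  rw [mem_range]
  unfold collapse
  split_ifs <;> omega

theorem exists_collapse_eq {m n i : ℕ} (hm : 1 ≤ m) (hn : 2 + 10 * m ≤ n) (hi : i ∈ range 12) :
    ∃ x < n, collapse m x = i := by
  rw [mem_range] at hi
  refine ⟨i, by omega, ?_⟩
  unfold collapse
  split_ifs <;> omega

theorem card_collapse_fiber_of_lt_two {m n i : ℕ} (hn : 2 ≤ n) (hi : i < 2) :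
    ((range n).filter fun x => collapse m x = i).card = 1 := by
  rw [card_eq_one]
  refine ⟨i, ?_⟩
  ext x
  rw [mem_singleton]
  grind [collapse]

theorem image_subset_collapse_fiber {m n i : ℕ} (hn : 2 + 10 * m ≤ n) (hi : i ∈ Ico 2 12) :
    (range m).image (fun j => i + 10 * j) ⊆ (range n).filter fun x => collapse m x = i := by
  intro x hx
  obtain ⟨j, hj, rfl⟩ := mem_image.1 hx
  rw [mem_range] at hj
  rw [mem_Ico] at hi
  rw [mem_filter, mem_range]
  refine ⟨by omega, ?_⟩
  unfold collapse
  split_ifs <;> omega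

theorem card_image_add_mul (m i : ℕ) : ((range m).image fun j => i + 10 * j).card = m := by
  have hinj : Function.Injective fun j => i + 10 * j := fun a b (h : i + 10 * a = i + 10 * b) => by
    omega
  rw [card_image_of_injective _ hinj, card_range]

theorem le_card_collapse_fiber {m n i : ℕ} (hn : 2 + 10 * m ≤ n) (hi : i ∈ Ico 2 12) :
    m ≤ ((range n).filter fun x => collapse m x = i).card :=
  (card_image_add_mul m i).symm.trans_le (card_le_card (image_subset_collapse_fiber hn hi))

theorem card_collapse_fiber {m n i : ℕ} (hn : 2 + 10 * m ≤ n) (hi : i ∈ Ico 3 12) :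
    ((range n).filter fun x => collapse m x = i).card = m := by
  have hi' := mem_Ico.1 hi
  rw [← (image_subset_collapse_fiber hn (mem_Ico.2 ⟨by omega, hi'.2⟩)).antisymm,
    card_image_add_mul]
  intro x hx
  rw [mem_filter, mem_range] at hx
  unfold collapse at hx
  refine mem_image.2 ⟨(x - i) / 10, ?_, ?_⟩
  · rw [mem_range]
    split_ifs at hx <;> omega
  · split_ifs at hx <;> omega

theorem card_mul_add_le_card_blowUp {m n : ℕ} (hn : 2 + 10 * m ≤ n) (A : Finset ℕ) :
    (A ∩ Ico 2 12).card * m + (A ∩ range 2).card ≤ (blowUp (collapse m) n A).card := by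
  have hdisj : Disjoint (A ∩ Ico 2 12) (A ∩ range 2) := by
    rw [disjoint_left]
    simp only [mem_inter, mem_Ico, mem_range]
    omega
  have hsub : (A ∩ Ico 2 12) ∪ (A ∩ range 2) ⊆ A :=
    union_subset inter_subset_left inter_subset_left
  rw [card_blowUp]
  refine le_trans ?_ (sum_le_sum_of_subset hsub)
  rw [sum_union hdisj]
  refine add_le_add ?_ ?_
  · rw [← smul_eq_mul]
    exact card_nsmul_le_sum _ _ _ fun i hi => le_card_collapse_fiber hn (mem_inter.1 hi).2
  · rw [card_eq_sum_ones]
    exact sum_le_sum fun i hi =>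
      (card_collapse_fiber_of_lt_two (by omega) (mem_range.1 (mem_inter.1 hi).2)).ge

theorem le_card_blowUp_of_mem_baseFamily {m n : ℕ} (hm : 1 ≤ m) (hn : 2 + 10 * m ≤ n)
    {A : Finset ℕ} (hA : A ∈ baseFamily) : 2 * m + 2 ≤ (blowUp (collapse m) n A).card := by
  refine le_trans ?_ (card_mul_add_le_card_blowUp hn A)
  obtain ⟨-, ⟨h0, h1, h2⟩ | ⟨h3, h⟩⟩ := mem_baseFamily.1 hA
  · have : range 2 ⊆ A ∩ range 2 := by
      intro i hi
      rw [mem_inter]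
      refine ⟨?_, hi⟩
      rw [mem_range] at hi
      interval_cases i <;> assumption
    have := card_le_card this
    rw [card_range] at this
    nlinarith
  · have : 0 < (A ∩ range 2).card := by
      rw [card_pos]
      rcases h with h | h
      · exact ⟨0, by simp [h.1]⟩
      · exact ⟨1, by simp [h.1]⟩
    nlinarith

theorem exists_isConstruction_two_mul_add_two {m n : ℕ} (hm : 1 ≤ m) (hn : 2 + 10 * m ≤ n) :
    ∃ F : Finset (Finset ℕ), IsConstruction F 2 (2 * m + 2) n := by
  have hf : ∀ A ∈ baseFamily, ∀ i ∈ A, ∃ x < n, collapse m x = i := fun A hA i hi =>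
    exists_collapse_eq hm hn ((mem_baseFamily.1 hA).1 hi)
  have hS : ({0, 1, 10, 11} : Finset ℕ) ∈ baseFamily := by
    rw [mem_baseFamily]
    decide
  have htop : range 12 ∈ baseFamily := by
    rw [mem_baseFamily]
    decide
  have hsup : (baseFamily.image (blowUp (collapse m) n)).sup id = range n := by
    refine le_antisymm (Finset.sup_le fun B hB => ?_) ?_
    · obtain ⟨A, -, rfl⟩ := mem_image.1 hB
      exact filter_subset _ _
    · refine le_trans (fun x hx => ?_) (le_sup (f := id) (mem_image_of_mem _ htop))
      exact mem_blowUp.2 ⟨mem_range.1 hx, collapse_mem_range m x⟩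
  refine ⟨baseFamily.image (blowUp (collapse m) n), ⟨_, mem_image_of_mem _ hS⟩,
    unionClosed_baseFamily.image_blowUp _ _, ?_, ⟨_, mem_image_of_mem _ hS, ?_⟩, ?_, ?_⟩
  · have : (range n).filter (Abundant (baseFamily.image (blowUp (collapse m) n))) = range 2 := by
      ext x
      rw [mem_filter, mem_range, mem_range, and_congr_right fun hx =>
        (abundant_image_blowUp_iff hf hx).trans
          ((abundant_baseFamily_iff _ (collapse_mem_range m x)).trans collapse_lt_two)]
      omega
    rw [hsup, this, card_range]
  · rw [card_blowUp]
    have h0 := card_collapse_fiber_of_lt_two (m := m) (n := n) (i := 0) (by omega) (by omega)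
    have h1 := card_collapse_fiber_of_lt_two (m := m) (n := n) (i := 1) (by omega) (by omega)
    have h10 := card_collapse_fiber (i := 10) hn (by decide)
    have h11 := card_collapse_fiber (i := 11) hn (by decide)
    rw [sum_insert (by decide), sum_insert (by decide), sum_insert (by decide), sum_singleton,
      h0, h1, h10, h11]
    omega
  · intro B hB
    obtain ⟨A, hA, rfl⟩ := mem_image.1 hB
    exact le_card_blowUp_of_mem_baseFamily hm hn hA
  · rw [hsup, card_range]

theorem range_two_ne_range {n : ℕ} (hn : 3 ≤ n) : range 2 ≠ range n := fun h => by
  have := congrArg card h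
  rw [card_range, card_range] at this
  omega

theorem isConstruction_zero {n : ℕ} (hn : 3 ≤ n) :
    IsConstruction {∅, range 2, range n} 2 0 n := by
  have hsub : range 2 ⊆ range n := range_mono (by omega)
  have hne := range_two_ne_range hn
  have h0 : (∅ : Finset ℕ) ∉ ({range 2, range n} : Finset (Finset ℕ)) := by
    simp only [mem_insert, mem_singleton, not_or]
    constructor <;> rw [eq_comm, range_eq_empty_iff] <;> omega
  have hsup : ({∅, range 2, range n} : Finset (Finset ℕ)).sup id = range n := by
    simp [hsub]
  refine ⟨⟨_, mem_insert_self _ _⟩, ?_, ?_, ⟨∅, by simp⟩, by simp, by rw [hsup, card_range]⟩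
  · intro A hA B hB
    simp only [mem_insert, mem_singleton] at hA hB
    rcases hA with rfl | rfl | rfl <;> rcases hB with rfl | rfl | rfl <;>
      simp [union_eq_left.2 hsub, union_eq_right.2 hsub]
  · have : (range n).filter (Abundant {∅, range 2, range n}) = range 2 := by
      ext x
      rw [mem_filter, Abundant, card_insert_of_notMem h0, card_pair hne, filter_insert,
        filter_insert, filter_singleton]
      by_cases hx : x < 2
      · have hxn : x < n := by omega
        simp [hx, hxn, hne]
      · by_cases hxn : x < n <;> simp [hx, hxn]
    rw [hsup, this, card_range]

theorem isConstruction_two {n : ℕ} (hn : 3 ≤ n) : IsConstruction {range 2, range n} 2 2 n := by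
  have hsub : range 2 ⊆ range n := range_mono (by omega)
  have hne := range_two_ne_range hn
  have hsup : ({range 2, range n} : Finset (Finset ℕ)).sup id = range n := by
    simp [hsub]
  refine ⟨⟨_, mem_insert_self _ _⟩, ?_, ?_, ⟨range 2, by simp⟩, ?_, by rw [hsup, card_range]⟩
  · intro A hA B hB
    simp only [mem_insert, mem_singleton] at hA hB
    rcases hA with rfl | rfl <;> rcases hB with rfl | rfl <;>
      simp [union_eq_left.2 hsub, union_eq_right.2 hsub]
  · have : (range n).filter (Abundant {range 2, range n}) = range 2 := by
      ext x
      rw [mem_filter, Abundant, card_pair hne, filter_insert, filter_singleton]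
      by_cases hx : x < 2
      · have hxn : x < n := by omega
        simp [hx, hxn, hne]
      · by_cases hxn : x < n <;> simp [hx, hxn]
    rw [hsup, this, card_range]
  · simp only [mem_insert, mem_singleton]
    rintro A (rfl | rfl) <;> rw [card_range]
    omega

theorem exists_2kn_construction_even (k n : ℕ) (hke : Even k)
    (hn : n ≥ max 3 (5 * k - 8)) :
    ∃ F : Finset (Finset ℕ), IsConstruction F 2 k n := by
  obtain ⟨h3, h5⟩ := max_le_iff.1 hn
  obtain ⟨j, rfl⟩ := hke
  obtain _ | _ | j := j
  · exact ⟨_, isConstruction_zero h3⟩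
  · exact ⟨_, isConstruction_two h3⟩
  · rw [show j + 1 + 1 + (j + 1 + 1) = 2 * (j + 1) + 2 by ring]
    exact exists_isConstruction_two_mul_add_two (by omega) (by omega)
end

section
/- For all integers k and n with n − 4 ≥ k ≥ 3 and n ≥ 9, there exists a (k−1, k, n)-construction, i.e. a finite union-closed family of finite sets with exactly k − 1 abundant elements, whose smallest set has size k and whose largest set has size n. -/
/-- A `(2,3,9)`-construction. -/
def base3 : Finset (Finset ℕ) :=
  {{0, 1, 8}, {0, 2, 7}, {0, 3, 5}, {1, 4, 6}, {0, 1, 2, 7}, {0, 1, 3, 5}, {0, 1, 4, 6},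
   {1, 4, 6, 8}, {0, 1, 2, 7, 8}, {0, 1, 3, 5, 8}, {0, 1, 4, 6, 8}, {0, 2, 3, 5, 7},
   {0, 1, 2, 3, 5, 7}, {0, 1, 2, 4, 6, 7}, {0, 1, 3, 4, 5, 6}, {0, 1, 2, 3, 5, 7, 8},
   {0, 1, 2, 4, 6, 7, 8}, {0, 1, 3, 4, 5, 6, 8}, {0, 1, 2, 3, 4, 5, 6, 7},
   {0, 1, 2, 3, 4, 5, 6, 7, 8}}

/-- A `(3,4,9)`-construction. -/
def base4 : Finset (Finset ℕ) :=
  {{0, 1, 3, 5}, {0, 2, 4, 6}, {1, 2, 7, 8}, {0, 1, 2, 3, 5}, {0, 1, 2, 4, 6}, {0, 1, 2, 7, 8},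
   {0, 1, 2, 3, 4, 5, 6}, {0, 1, 2, 3, 5, 7, 8}, {0, 1, 2, 4, 6, 7, 8},
   {0, 1, 2, 3, 4, 5, 6, 7, 8}}

/-- A `(4,5,9)`-construction. -/
def base5 : Finset (Finset ℕ) :=
  {{0, 1, 2, 3, 4}, {0, 1, 2, 3, 5}, {0, 1, 2, 3, 8}, {0, 1, 2, 4, 5}, {0, 1, 2, 4, 8},
   {0, 1, 2, 5, 8}, {0, 1, 3, 6, 7}, {0, 2, 3, 6, 7}, {1, 2, 3, 6, 7}, {0, 1, 2, 3, 4, 5},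
   {0, 1, 2, 3, 4, 8}, {0, 1, 2, 3, 5, 8}, {0, 1, 2, 3, 6, 7}, {0, 1, 2, 4, 5, 8},
   {0, 1, 2, 3, 4, 5, 8}, {0, 1, 2, 3, 4, 6, 7}, {0, 1, 2, 3, 5, 6, 7}, {0, 1, 2, 3, 6, 7, 8},
   {0, 1, 2, 3, 4, 5, 6, 7}, {0, 1, 2, 3, 4, 6, 7, 8}, {0, 1, 2, 3, 5, 6, 7, 8},
   {0, 1, 2, 3, 4, 5, 6, 7, 8}}

/-- `F` is an `(f,k,n)`-construction in which some non-abundant element avoids a smallest set. -/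
def IsExtensible (F : Finset (Finset ℕ)) (f k n : ℕ) : Prop :=
  IsConstruction F f k n ∧ ∃ S ∈ F, S.card = k ∧ ∃ x ∈ F.sup id, x ∉ S ∧ ¬ Abundant F x

theorem isExtensible_base3 : IsExtensible base3 2 3 9 := by
  unfold IsExtensible IsConstruction UnionClosed
  decide +kernel

theorem isExtensible_base4 : IsExtensible base4 3 4 9 := by
  unfold IsExtensible IsConstruction UnionClosed
  decide +kernel

theorem isExtensible_base5 : IsExtensible base5 4 5 9 := by
  unfold IsExtensible IsConstruction UnionClosed
  decide +kernel

/-- Add `y` to the sets satisfying `P`. -/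
def insertIf (P : Finset ℕ → Prop) [DecidablePred P] (y : ℕ) (A : Finset ℕ) : Finset ℕ :=
  if P A then insert y A else A

section InsertIf

variable {F : Finset (Finset ℕ)} {P : Finset ℕ → Prop} [DecidablePred P] {y : ℕ}

theorem mem_insertIf {A : Finset ℕ} {z : ℕ} :
    z ∈ insertIf P y A ↔ z ∈ A ∨ (z = y ∧ P A) := by
  unfold insertIf
  split_ifs with h <;> simp [h, or_comm]

theorem notMem_of_notMem_sup (hy : y ∉ F.sup id) {A : Finset ℕ} (hA : A ∈ F) : y ∉ A :=
  fun h => hy (Finset.mem_sup.2 ⟨A, hA, h⟩)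

theorem insertIf_injOn (hy : y ∉ F.sup id) : Set.InjOn (insertIf P y) F := by
  intro A hA B hB h
  have hyA := notMem_of_notMem_sup hy hA
  have hyB := notMem_of_notMem_sup hy hB
  ext z
  by_cases hz : z = y
  · simp [hz, hyA, hyB]
  · simpa [mem_insertIf, hz] using congrArg (z ∈ ·) h

theorem card_insertIf (hy : y ∉ F.sup id) {A : Finset ℕ} (hA : A ∈ F) :
    (insertIf P y A).card = A.card + if P A then 1 else 0 := by
  unfold insertIf
  split_ifs <;> simp [notMem_of_notMem_sup hy hA]

theorem UnionClosed.image_insertIf (hF : UnionClosed F)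
    (hP : ∀ A B, P (A ∪ B) ↔ P A ∨ P B) : UnionClosed (F.image (insertIf P y)) := by
  intro A' hA' B' hB'
  obtain ⟨A, hA, rfl⟩ := Finset.mem_image.1 hA'
  obtain ⟨B, hB, rfl⟩ := Finset.mem_image.1 hB'
  refine Finset.mem_image.2 ⟨A ∪ B, hF A hA B hB, ?_⟩
  ext z
  simp only [mem_insertIf, Finset.mem_union, hP]
  tauto

theorem sup_image_insertIf (hP : ∃ A ∈ F, P A) :
    (F.image (insertIf P y)).sup id = insert y (F.sup id) := by
  obtain ⟨A, hA, hPA⟩ := hP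
  ext z
  simp only [Finset.mem_sup, Finset.mem_image, exists_exists_and_eq_and, id, mem_insertIf,
    Finset.mem_insert]
  constructor
  · rintro ⟨B, hB, h | h⟩
    · exact .inr ⟨B, hB, h⟩
    · exact .inl h.1
  · rintro (h | ⟨B, hB, h⟩)
    · exact ⟨A, hA, .inr ⟨h, hPA⟩⟩
    · exact ⟨B, hB, .inl h⟩

theorem card_filter_mem_image_insertIf (hy : y ∉ F.sup id) (z : ℕ) :
    ((F.image (insertIf P y)).filter (z ∈ ·)).card =
      (F.filter (fun A => z ∈ A ∨ (z = y ∧ P A))).card := by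
  rw [Finset.filter_image, Finset.card_image_of_injOn
    ((insertIf_injOn hy).mono (Finset.coe_subset.2 (Finset.filter_subset _ _)))]
  simp only [mem_insertIf]

theorem abundant_image_insertIf_of_ne (hy : y ∉ F.sup id) {z : ℕ} (hz : z ≠ y) :
    Abundant (F.image (insertIf P y)) z ↔ Abundant F z := by
  unfold Abundant
  rw [card_filter_mem_image_insertIf hy, Finset.card_image_of_injOn (insertIf_injOn hy)]
  simp [hz]

theorem abundant_image_insertIf_self (hy : y ∉ F.sup id) :
    Abundant (F.image (insertIf P y)) y ↔ 2 * (F.filter P).card > F.card := by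
  unfold Abundant
  rw [card_filter_mem_image_insertIf hy, Finset.card_image_of_injOn (insertIf_injOn hy)]
  rw [Finset.filter_congr (q := P)]
  intro A hA
  simp [notMem_of_notMem_sup hy hA]

theorem filter_abundant_image_insertIf (hy : y ∉ F.sup id) (hP : ∃ A ∈ F, P A) :
    (((F.image (insertIf P y)).sup id).filter (Abundant (F.image (insertIf P y)))).card =
      ((F.sup id).filter (Abundant F)).card +
        if 2 * (F.filter P).card > F.card then 1 else 0 := by
  have h : (F.sup id).filter (Abundant (F.image (insertIf P y))) =
      (F.sup id).filter (Abundant F) :=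
    Finset.filter_congr fun z hz =>
      abundant_image_insertIf_of_ne hy (ne_of_mem_of_not_mem hz hy)
  rw [sup_image_insertIf hP, Finset.filter_insert, h]
  simp only [abundant_image_insertIf_self hy]
  split_ifs
  · exact Finset.card_insert_of_notMem fun h => hy (Finset.mem_filter.1 h).1
  · rfl

end InsertIf

/-- Adding a new element to every set. -/
theorem IsExtensible.add_common {F : Finset (Finset ℕ)} {f k n : ℕ} (hF : IsExtensible F f k n) :
    ∃ F', IsExtensible F' (f + 1) (k + 1) (n + 1) := by
  obtain ⟨⟨hne, huc, hf, -, hmin, hn⟩, S, hS, hSk, x, hx, hxS, hxa⟩ := hF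
  obtain ⟨y, hy⟩ := Infinite.exists_notMem_finset (F.sup id)
  have hxy : x ≠ y := ne_of_mem_of_not_mem hx hy
  let P : Finset ℕ → Prop := fun _ => True
  have hP : ∃ A ∈ F, P A := ⟨S, hS, trivial⟩
  have hS' : insertIf P y S ∈ F.image (insertIf P y) := Finset.mem_image_of_mem _ hS
  have hcard {A : Finset ℕ} (hA : A ∈ F) : (insertIf P y A).card = A.card + 1 := by
    simp [card_insertIf hy hA, P]
  refine ⟨F.image (insertIf P y), ⟨hne.image _, huc.image_insertIf (by simp [P]), ?_,
    ⟨_, hS', by rw [hcard hS, hSk]⟩, ?_, ?_⟩, _, hS', by rw [hcard hS, hSk], x, ?_, ?_, ?_⟩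
  · rw [filter_abundant_image_insertIf hy hP, hf, if_pos]
    have := hne.card_pos
    simp only [P, Finset.filter_true]
    omega
  · simp only [Finset.forall_mem_image]
    intro A hA
    rw [hcard hA]
    exact Nat.succ_le_succ (hmin A hA)
  · rw [sup_image_insertIf hP, Finset.card_insert_of_notMem hy, hn]
  · rw [sup_image_insertIf hP]
    exact Finset.mem_insert_of_mem hx
  · simp [mem_insertIf, hxS, hxy]
  · rwa [abundant_image_insertIf_of_ne hy hxy]

/-- Cloning a non-abundant element that avoids a smallest set. -/
theorem IsExtensible.clone {F : Finset (Finset ℕ)} {f k n : ℕ} (hF : IsExtensible F f k n) :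
    ∃ F', IsExtensible F' f k (n + 1) := by
  obtain ⟨⟨hne, huc, hf, -, hmin, hn⟩, S, hS, hSk, x, hx, hxS, hxa⟩ := hF
  obtain ⟨y, hy⟩ := Infinite.exists_notMem_finset (F.sup id)
  have hxy : x ≠ y := ne_of_mem_of_not_mem hx hy
  have hP : ∃ A ∈ F, x ∈ A := by simpa [Finset.mem_sup] using hx
  have hS' : insertIf (x ∈ ·) y S ∈ F.image (insertIf (x ∈ ·) y) :=
    Finset.mem_image_of_mem _ hS
  have hSk' : (insertIf (x ∈ ·) y S).card = k := by
    rw [card_insertIf hy hS, if_neg hxS, hSk, add_zero]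
  refine ⟨F.image (insertIf (x ∈ ·) y), ⟨hne.image _,
    huc.image_insertIf fun _ _ => Finset.mem_union, ?_, ⟨_, hS', hSk'⟩, ?_, ?_⟩,
    _, hS', hSk', x, ?_, ?_, ?_⟩
  · rw [filter_abundant_image_insertIf hy hP, hf]
    exact congrArg (f + ·) (if_neg hxa)
  · simp only [Finset.forall_mem_image]
    intro A hA
    rw [card_insertIf hy hA]
    exact (hmin A hA).trans (Nat.le_add_right _ _)
  · rw [sup_image_insertIf hP, Finset.card_insert_of_notMem hy, hn]
  · rw [sup_image_insertIf hP]
    exact Finset.mem_insert_of_mem hx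
  · simp [mem_insertIf, hxS]
  · rwa [abundant_image_insertIf_of_ne hy hxy]

theorem IsExtensible.add_common_iterate {F : Finset (Finset ℕ)} {f k n : ℕ}
    (hF : IsExtensible F f k n) (m : ℕ) : ∃ F', IsExtensible F' (f + m) (k + m) (n + m) := by
  induction m with
  | zero => exact ⟨F, hF⟩
  | succ m ih => exact ih.elim fun _ h => h.add_common

theorem IsExtensible.clone_iterate {F : Finset (Finset ℕ)} {f k n : ℕ}
    (hF : IsExtensible F f k n) (m : ℕ) : ∃ F', IsExtensible F' f k (n + m) := by
  induction m with
  | zero => exact ⟨F, hF⟩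
  | succ m ih => exact ih.elim fun _ h => h.clone

theorem exists_km1_kn_construction (k n : ℕ) (hk : 3 ≤ k) (hkn : k ≤ n - 4)
    (hn : 9 ≤ n) :
    ∃ F : Finset (Finset ℕ), IsConstruction F (k - 1) k n := by
  suffices h : ∃ F m, IsExtensible F (k - 1) k m ∧ m ≤ n by
    obtain ⟨F, m, hF, hmn⟩ := h
    obtain ⟨F', hF'⟩ := hF.clone_iterate (n - m)
    rw [Nat.add_sub_cancel' hmn] at hF'
    exact ⟨F', hF'.1⟩
  obtain rfl | rfl | hk5 : k = 3 ∨ k = 4 ∨ 5 ≤ k := by omega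
  · exact ⟨_, _, isExtensible_base3, hn⟩
  · exact ⟨_, _, isExtensible_base4, hn⟩
  · obtain ⟨F, hF⟩ := isExtensible_base5.add_common_iterate (k - 5)
    refine ⟨F, 9 + (k - 5), ?_, by omega⟩
    convert hF using 1 <;> omega
end
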